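/- arXiv:1501.04958 — 2 statements merged into one kernel-verified Lean document; each statement's English description precedes it below -/
import Mathlib

section
/- Let T be a hyperbolic C₀-semigroup on X with Green function G(t) = −T(t)P_in for t ≥ 0 and G(t) = T_out(t)P_out for t < 0. Then for every bounded continuous y : ℝ → X, the function x = G∗y defined by x(t) = ∫_ℝ G(t−τ)y(τ)dτ is bounded continuous and satisfies x(t) − T(t−s)x(s) = −∫_s^t T(t−τ)y(τ)dτ for all s ≤ t. In particular 𝓛x = y, so 𝓛 is surjective on C_b(ℝ,X). -/
/-!
Write `A = T 1` and let `Jₖ = (2πi)⁻¹ ∮ zᵏ (z - A)⁻¹ dz` over the unit circle, so that `P = J₀`.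
Since `A (z - A)⁻¹ = z (z - A)⁻¹ - 1`, one has `A Jₖ = Jₖ₊₁` for `k ≠ -1` and `A J₋₁ = P - 1`; hence
`Aⁿ P = Jₙ` and `-J₋₁₋ₙ` inverts `Aⁿ⁺¹` on the range of `1 - P`. The resolvent set is open, so the
circle may be shrunk or enlarged a little, which bounds both families by a geometric sequence.
The Green function therefore decays exponentially, and `G ∗ y` is continuous and bounded by
dominated convergence. Finally `G (r + u) - T r G u` vanishes except for `-r ≤ u < 0`, where it is
`-T (r + u)`; integrating this jump against `y` gives the variation-of-constants identity.
-/

open MeasureTheory Set Filter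
open scoped Topology

section ResolventMoments

theorem circleIntegral_clm_comp_comm {E F : Type*} [NormedAddCommGroup E] [NormedSpace ℂ E]
    [CompleteSpace E] [NormedAddCommGroup F] [NormedSpace ℂ F] [CompleteSpace F]
    (L : E →L[ℂ] F) {f : ℂ → E} {c : ℂ} {r : ℝ} (hf : CircleIntegrable f c r) :
    ∮ z in C(c, r), L (f z) = L (∮ z in C(c, r), f z) := by
  simp only [circleIntegral, ← L.map_smul]
  exact L.intervalIntegral_comp_comm hf.out

theorem exists_Icc_inv_subset_of_mem_nhds_one {U : Set ℝ} (hU : U ∈ 𝓝 1) :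
    ∃ q ∈ Ioo (0 : ℝ) 1, Icc q q⁻¹ ⊆ U := by
  have hinv : Tendsto (fun q : ℝ ↦ q⁻¹) (𝓝[<] 1) (𝓝 1) := by
    simpa only [inv_one] using (tendsto_inv₀ (one_ne_zero' ℝ)).mono_left nhdsWithin_le_nhds
  have hIcc : ∀ᶠ q : ℝ in 𝓝[<] 1, Icc q q⁻¹ ⊆ U :=
    ((tendsto_nhdsWithin_of_tendsto_nhds tendsto_id).Icc hinv).eventually
      (eventually_smallSets_subset.2 hU)
  exact ((eventually_mem_set.2 (Ioo_mem_nhdsLT zero_lt_one)).and hIcc).exists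

theorem exists_annulus_subset_of_sphere_subset {E : Type*} [NormedAddCommGroup E] [ProperSpace E]
    {U : Set E} (hU : IsOpen U) (h : Metric.sphere (0 : E) 1 ⊆ U) :
    ∃ q ∈ Ioo (0 : ℝ) 1, ∀ z : E, ‖z‖ ∈ Icc q q⁻¹ → z ∈ U := by
  have hclosed : IsClosed (dist (0 : E) '' Uᶜ) := isClosedMap_dist 0 _ hU.isClosed_compl
  have hone : 1 ∉ dist (0 : E) '' Uᶜ := by
    rintro ⟨z, hz, hz1⟩
    exact hz (h (Metric.mem_sphere'.2 hz1))
  obtain ⟨q, hq, hsub⟩ := exists_Icc_inv_subset_of_mem_nhds_one (hclosed.isOpen_compl.mem_nhds hone)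
  exact ⟨q, hq, fun z hz ↦ by_contra fun hzU ↦ hsub hz ⟨z, hzU, dist_zero_left z⟩⟩

variable {B : Type*} [NormedRing B] [NormedAlgebra ℂ B] {a : B} {r R : ℝ}

/-- The moments `(2πi)⁻¹ ∮ zᵏ (z - a)⁻¹ dz` of the resolvent over the circle of radius `r` around
`0`. When the circle avoids the spectrum, these are the Laurent coefficients of the resolvent near
it. -/
noncomputable def resolventMoment (a : B) (r : ℝ) (k : ℤ) : B :=
  (2 * (Real.pi : ℂ) * Complex.I)⁻¹ • ∮ z in C(0, r), z ^ k • resolvent a z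

/-- The Riesz projection `(2πi)⁻¹ ∮ (z - a)⁻¹ dz` onto the part of the spectrum of `a` inside the
circle of radius `r` around `0`. -/
noncomputable def rieszProjection (a : B) (r : ℝ) : B :=
  (2 * (Real.pi : ℂ) * Complex.I)⁻¹ • ∮ z in C(0, r), resolvent a z

theorem resolventMoment_zero (a : B) (r : ℝ) : resolventMoment a r 0 = rieszProjection a r := by
  simp only [resolventMoment, rieszProjection, zpow_zero, one_smul]

theorem commute_resolvent {c : B} {z : ℂ} (hc : Commute c a) (hz : z ∈ resolventSet ℂ a) :
    Commute c (resolvent a z) := by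
  rw [spectrum.resolvent_eq hz]
  exact Commute.units_inv_right ((Algebra.commute_algebraMap_right z c).sub_right hc)

theorem norm_resolventMoment_le {M : ℝ} (hr : 0 ≤ r)
    (hM : ∀ z ∈ Metric.sphere (0 : ℂ) r, ‖resolvent a z‖ ≤ M) (k : ℤ) :
    ‖resolventMoment a r k‖ ≤ r * (r ^ k * M) := by
  refine circleIntegral.norm_two_pi_i_inv_smul_integral_le_of_norm_le_const hr fun z hz ↦ ?_
  rw [norm_smul, norm_zpow, mem_sphere_zero_iff_norm.1 hz]
  exact mul_le_mul_of_nonneg_left (hM z hz) (zpow_nonneg hr k)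

theorem mul_resolvent_eq {z : ℂ} (hz : z ∈ resolventSet ℂ a) :
    a * resolvent a z = z • resolvent a z - 1 := by
  have hinv : (algebraMap ℂ B z - a) * resolvent a z = 1 := Ring.mul_inverse_cancel _ hz
  rw [sub_mul, ← Algebra.smul_def] at hinv
  rw [← hinv, sub_sub_cancel]

variable [CompleteSpace B]

theorem differentiableAt_zpow_smul_resolvent {z : ℂ} (hz : z ≠ 0) (hza : z ∈ resolventSet ℂ a)
    (k : ℤ) : DifferentiableAt ℂ (fun z ↦ z ^ k • resolvent a z) z :=
  (differentiableAt_zpow.2 (.inl hz)).smul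
    (spectrum.hasDerivAt_resolvent_const_left hza).differentiableAt

theorem circleIntegrable_zpow_smul_resolvent (hr : 0 < r)
    (h : Metric.sphere (0 : ℂ) r ⊆ resolventSet ℂ a) (k : ℤ) :
    CircleIntegrable (fun z ↦ z ^ k • resolvent a z) 0 r :=
  ContinuousOn.circleIntegrable hr.le fun z hz ↦
    (differentiableAt_zpow_smul_resolvent (ne_zero_of_mem_sphere hr.ne' ⟨z, hz⟩) (h hz)
      k).continuousAt.continuousWithinAt

theorem resolventMoment_eq_of_annulus (hr : 0 < r) (hrR : r ≤ R)
    (h : ∀ z : ℂ, ‖z‖ ∈ Icc r R → z ∈ resolventSet ℂ a) (k : ℤ) :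
    resolventMoment a R k = resolventMoment a r k := by
  have hdiff (z : ℂ) (hz : ‖z‖ ∈ Icc r R) :
      DifferentiableAt ℂ (fun z ↦ z ^ k • resolvent a z) z :=
    differentiableAt_zpow_smul_resolvent (norm_pos_iff.1 (hr.trans_le hz.1)) (h z hz) k
  unfold resolventMoment
  congr 1
  refine Complex.circleIntegral_eq_of_differentiable_on_annulus_off_countable hr hrR
    countable_empty (fun z hz ↦ ?_) (fun z hz ↦ ?_)
  · simp only [Set.mem_sdiff, mem_closedBall_zero_iff, mem_ball_zero_iff, not_lt] at hz
    exact (hdiff z hz.symm).continuousAt.continuousWithinAt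
  · simp only [Set.mem_sdiff, mem_ball_zero_iff, mem_closedBall_zero_iff, not_le] at hz
    exact hdiff z ⟨hz.1.2.le, hz.1.1.le⟩

theorem commute_rieszProjection {c : B} (hc : Commute c a) (hr : 0 < r)
    (h : Metric.sphere (0 : ℂ) r ⊆ resolventSet ℂ a) : Commute c (rieszProjection a r) := by
  have hint : CircleIntegrable (resolvent a) 0 r := by
    simpa only [zpow_zero, one_smul] using circleIntegrable_zpow_smul_resolvent hr h 0
  have hcomm : c * (∮ z in C(0, r), resolvent a z) = (∮ z in C(0, r), resolvent a z) * c :=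
    calc
      _ = ∮ z in C(0, r), c * resolvent a z :=
        (circleIntegral_clm_comp_comm (ContinuousLinearMap.mul ℂ B c) hint).symm
      _ = ∮ z in C(0, r), resolvent a z * c :=
        circleIntegral.integral_congr hr.le fun z hz ↦ commute_resolvent hc (h hz)
      _ = _ := circleIntegral_clm_comp_comm ((ContinuousLinearMap.mul ℂ B).flip c) hint
  exact Commute.smul_right hcomm _

theorem mul_resolventMoment (hr : 0 < r) (h : Metric.sphere (0 : ℂ) r ⊆ resolventSet ℂ a) (k : ℤ) :
    a * resolventMoment a r k = resolventMoment a r (k + 1) -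
      ((2 * (Real.pi : ℂ) * Complex.I)⁻¹ * ∮ z in C(0, r), z ^ k) • (1 : B) := by
  have hne {z : ℂ} (hz : z ∈ Metric.sphere (0 : ℂ) r) : z ≠ 0 :=
    ne_zero_of_mem_sphere hr.ne' ⟨z, hz⟩
  have hint := circleIntegrable_zpow_smul_resolvent hr h
  have hone : CircleIntegrable (fun z : ℂ ↦ z ^ k • (1 : B)) 0 r :=
    ContinuousOn.circleIntegrable hr.le fun z hz ↦
      ((continuousAt_zpow₀ z k (.inl (hne hz))).smul continuousAt_const).continuousWithinAt
  have hint_mul : a * (∮ z in C(0, r), z ^ k • resolvent a z) =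
      (∮ z in C(0, r), z ^ (k + 1) • resolvent a z) - ∮ z in C(0, r), z ^ k • (1 : B) := by
    rw [← circleIntegral.integral_sub (hint _) hone]
    refine (circleIntegral_clm_comp_comm (ContinuousLinearMap.mul ℂ B a) (hint k)).symm.trans
      (circleIntegral.integral_congr hr.le fun z hz ↦ ?_)
    simp only [ContinuousLinearMap.mul_apply', mul_smul_comm, mul_resolvent_eq (h hz), smul_sub,
      smul_smul, zpow_add_one₀ (hne hz)]
  rw [resolventMoment, mul_smul_comm, hint_mul, smul_sub, circleIntegral.integral_smul_const,
    smul_smul, resolventMoment]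

theorem mul_resolventMoment_of_ne (hr : 0 < r) (h : Metric.sphere (0 : ℂ) r ⊆ resolventSet ℂ a)
    {k : ℤ} (hk : k ≠ -1) : a * resolventMoment a r k = resolventMoment a r (k + 1) := by
  have hzero : (∮ z in C(0, r), z ^ k) = 0 := by
    simpa only [sub_zero] using circleIntegral.integral_sub_zpow_of_ne hk 0 0 r
  rw [mul_resolventMoment hr h, hzero, mul_zero, zero_smul, sub_zero]

theorem mul_resolventMoment_neg_one (hr : 0 < r)
    (h : Metric.sphere (0 : ℂ) r ⊆ resolventSet ℂ a) :
    a * resolventMoment a r (-1) = rieszProjection a r - 1 := by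
  have htwo : (∮ z in C(0, r), z ^ (-1 : ℤ)) = 2 * Real.pi * Complex.I := by
    simpa only [sub_zero, zpow_neg_one] using circleIntegral.integral_sub_center_inv 0 hr.ne'
  rw [mul_resolventMoment hr h, htwo, inv_mul_cancel₀ Complex.two_pi_I_ne_zero, one_smul,
    neg_add_cancel, resolventMoment_zero]

theorem pow_mul_rieszProjection (hr : 0 < r) (h : Metric.sphere (0 : ℂ) r ⊆ resolventSet ℂ a)
    (n : ℕ) : a ^ n * rieszProjection a r = resolventMoment a r n := by
  induction n with
  | zero => rw [pow_zero, one_mul, Nat.cast_zero, resolventMoment_zero]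
  | succ n ih =>
    rw [pow_succ', mul_assoc, ih, mul_resolventMoment_of_ne hr h (by omega), Nat.cast_succ]

theorem pow_succ_mul_resolventMoment_neg (hr : 0 < r)
    (h : Metric.sphere (0 : ℂ) r ⊆ resolventSet ℂ a) (n : ℕ) :
    a ^ (n + 1) * resolventMoment a r (-1 - n) = rieszProjection a r - 1 := by
  induction n with
  | zero => rw [zero_add, pow_one, Nat.cast_zero, sub_zero, mul_resolventMoment_neg_one hr h]
  | succ n ih =>
    rw [pow_succ, mul_assoc, mul_resolventMoment_of_ne hr h (by omega), ← ih]
    congr 2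
    push_cast
    ring

theorem exists_norm_pow_mul_rieszProjection_le (h : Metric.sphere (0 : ℂ) 1 ⊆ resolventSet ℂ a) :
    ∃ q ∈ Ioo (0 : ℝ) 1, ∃ C : ℝ, ∀ n : ℕ, ‖a ^ n * rieszProjection a 1‖ ≤ C * q ^ n ∧
      ‖resolventMoment a 1 (-1 - n)‖ ≤ C * q ^ n := by
  obtain ⟨q, ⟨hq0, hq1⟩, hann⟩ :=
    exists_annulus_subset_of_sphere_subset (spectrum.isOpen_resolventSet a) h
  have hq1' : 1 ≤ q⁻¹ := (one_le_inv₀ hq0).2 hq1.le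
  have hcompact : IsCompact {z : ℂ | ‖z‖ ∈ Icc q q⁻¹} := by
    simpa only [preimage, dist_zero_left] using
      (isProperMap_dist (0 : ℂ)).isCompact_preimage isCompact_Icc
  obtain ⟨M, hM⟩ := hcompact.exists_bound_of_continuousOn (f := resolvent a) fun z hz ↦
    (spectrum.hasDerivAt_resolvent_const_left (hann z hz)).continuousAt.continuousWithinAt
  have hM_sphere {r : ℝ} (hr : r ∈ Icc q q⁻¹) (z : ℂ) (hz : z ∈ Metric.sphere 0 r) :
      ‖resolvent a z‖ ≤ M :=
    hM z ((mem_sphere_zero_iff_norm.1 hz).symm ▸ hr : ‖z‖ ∈ Icc q q⁻¹)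
  have hM0 : 0 ≤ M := (norm_nonneg _).trans (hM_sphere ⟨hq1.le, hq1'⟩ 1 (by simp))
  refine ⟨q, ⟨hq0, hq1⟩, M, fun n ↦ ⟨?_, ?_⟩⟩
  · rw [pow_mul_rieszProjection one_pos h,
      resolventMoment_eq_of_annulus hq0 hq1.le fun z hz ↦ hann z ⟨hz.1, hz.2.trans hq1'⟩]
    calc ‖resolventMoment a q n‖ ≤ q * (q ^ (n : ℤ) * M) :=
          norm_resolventMoment_le hq0.le (hM_sphere ⟨le_rfl, hq1.le.trans hq1'⟩) n
      _ ≤ 1 * (q ^ (n : ℤ) * M) := by gcongr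
      _ = M * q ^ n := by rw [one_mul, zpow_natCast, mul_comm]
  · rw [← resolventMoment_eq_of_annulus one_pos hq1' fun z hz ↦ hann z ⟨hq1.le.trans hz.1, hz.2⟩]
    calc ‖resolventMoment a q⁻¹ (-1 - n)‖ ≤ q⁻¹ * (q⁻¹ ^ (-1 - (n : ℤ)) * M) :=
          norm_resolventMoment_le (by positivity) (hM_sphere ⟨hq1.le.trans hq1', le_rfl⟩) _
      _ = M * q ^ n := by
        rw [← mul_assoc, ← zpow_one_add₀ (inv_ne_zero hq0.ne'), ← add_sub_assoc,
          add_neg_cancel, zero_sub, inv_zpow', neg_neg, zpow_natCast, mul_comm]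

theorem isIdempotentElem_rieszProjection (h : Metric.sphere (0 : ℂ) 1 ⊆ resolventSet ℂ a) :
    IsIdempotentElem (rieszProjection a 1) := by
  set P := rieszProjection a 1
  obtain ⟨q, ⟨hq0, hq1⟩, C, hC⟩ := exists_norm_pow_mul_rieszProjection_le h
  have hbound (n : ℕ) : ‖P * (P - 1)‖ ≤ C * q ^ (n + 1) * (C * q ^ n) := by
    rw [← pow_succ_mul_resolventMoment_neg one_pos h n, ← mul_assoc,
      ← (commute_rieszProjection (Commute.pow_self a (n + 1)) one_pos h).eq]
    exact norm_mul_le_of_le (hC (n + 1)).1 (hC n).2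
  have hq : Tendsto (fun n : ℕ ↦ C * q ^ n) atTop (𝓝 0) := by
    simpa only [mul_zero] using (tendsto_pow_atTop_nhds_zero_of_lt_one hq0.le hq1).const_mul C
  have hzero : Tendsto (fun n : ℕ ↦ C * q ^ (n + 1) * (C * q ^ n)) atTop (𝓝 0) := by
    simpa only [mul_zero] using ((tendsto_add_atTop_iff_nat 1).2 hq).mul hq
  rw [IsIdempotentElem, ← sub_eq_zero, ← mul_sub_one]
  exact norm_le_zero_iff.1 (ge_of_tendsto' hzero hbound)

end ResolventMoments

section StronglyContinuous

variable {𝕜 E F : Type*} [NontriviallyNormedField 𝕜] [NormedAddCommGroup E] [NormedSpace 𝕜 E]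
  [NormedAddCommGroup F] [NormedSpace 𝕜 F]

theorem exists_norm_le_of_continuousOn_apply {α : Type*} [TopologicalSpace α] [CompleteSpace E]
    {f : α → E →L[𝕜] F} {s : Set α} (hs : IsCompact s)
    (hf : ∀ v, ContinuousOn (fun t ↦ f t v) s) : ∃ M, ∀ t ∈ s, ‖f t‖ ≤ M := by
  have hpointwise (v : E) : ∃ C, ∀ t : s, ‖f t v‖ ≤ C :=
    (hs.exists_bound_of_continuousOn (hf v)).imp fun C hC t ↦ hC t t.2
  exact (banach_steinhaus hpointwise).imp fun M hM t ht ↦ hM ⟨t, ht⟩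

theorem aestronglyMeasurable_clm_apply {α : Type*} [MeasurableSpace α] {μ : Measure α}
    {f : α → E →L[𝕜] F} {g : α → E} (hf : ∀ v, AEStronglyMeasurable (fun t ↦ f t v) μ)
    (hg : AEStronglyMeasurable g μ) : AEStronglyMeasurable (fun t ↦ f t (g t)) μ := by
  have hsimple (s : SimpleFunc α E) : AEStronglyMeasurable (fun t ↦ f t (s t)) μ := by
    induction s using SimpleFunc.induction with
    | const v hs =>
      refine ((hf v).indicator hs).congr (.of_forall fun t ↦ ?_)
      simp only [SimpleFunc.coe_piecewise, SimpleFunc.coe_const, indicator, piecewise,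
        Function.const_apply, apply_ite (f t), map_zero]
    | add _ hp hq => simpa only [SimpleFunc.coe_add, Pi.add_apply, map_add] using hp.fun_add hq
  obtain ⟨g', hg', hgg'⟩ := hg
  refine aestronglyMeasurable_of_tendsto_ae atTop (fun n ↦ hsimple (hg'.approx n)) ?_
  filter_upwards [hgg'] with t ht
  rw [ht]
  exact ((f t).continuous.tendsto _).comp (hg'.tendsto_approx t)

end StronglyContinuous

section Convolution

theorem integrable_rpow_abs {q : ℝ} (hq0 : 0 < q) (hq1 : q < 1) :
    Integrable fun u : ℝ ↦ q ^ |u| := by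
  have hlog : Real.log q < 0 := Real.log_neg hq0 hq1
  rw [← integrableOn_univ, ← Iic_union_Ioi (a := (0 : ℝ))]
  refine IntegrableOn.union ?_ ?_
  · refine (integrableOn_exp_mul_Iic (neg_pos.2 hlog) 0).congr_fun (fun u hu ↦ ?_)
      measurableSet_Iic
    simp only [abs_of_nonpos (mem_Iic.1 hu), Real.rpow_def_of_pos hq0, neg_mul, mul_neg]
  · refine (integrableOn_exp_mul_Ioi hlog 0).congr_fun (fun u hu ↦ ?_) measurableSet_Ioi
    simp only [abs_of_pos (mem_Ioi.1 hu), Real.rpow_def_of_pos hq0]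

theorem rpow_abs_sub_le {q s t : ℝ} (hq0 : 0 < q) (hq1 : q ≤ 1) (hst : |s - t| ≤ 1) (τ : ℝ) :
    q ^ |s - τ| ≤ q⁻¹ * q ^ |t - τ| := by
  rw [← Real.rpow_neg_one, ← Real.rpow_add hq0]
  refine Real.rpow_le_rpow_of_exponent_ge hq0 hq1 ?_
  linarith [abs_sub_le t s τ, abs_sub_comm s t]

variable {𝕜 E F : Type*} [NontriviallyNormedField 𝕜] [NormedAddCommGroup E] [NormedSpace 𝕜 E]
  [NormedAddCommGroup F] [NormedSpace 𝕜 F] {G : ℝ → E →L[𝕜] F} {y : ℝ → E} {K q C : ℝ}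

theorem norm_apply_le_of_norm_le_rpow (hG : ∀ u, ‖G u‖ ≤ K * q ^ |u|) {v : E} (hv : ‖v‖ ≤ C)
    (u : ℝ) : ‖G u v‖ ≤ K * q ^ |u| * C :=
  ((G u).le_opNorm v).trans (mul_le_mul (hG u) hv (norm_nonneg _) ((norm_nonneg _).trans (hG u)))

theorem aestronglyMeasurable_convolution (hGc : ∀ v, ContinuousOn (fun u ↦ G u v) {0}ᶜ)
    (hy : AEStronglyMeasurable y) (t : ℝ) : AEStronglyMeasurable fun τ ↦ G (t - τ) (y τ) := by
  refine aestronglyMeasurable_clm_apply (fun v ↦ ?_) hy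
  have hGv : AEStronglyMeasurable fun u ↦ G u v := by
    simpa only [restrict_compl_singleton] using
      (hGc v).aestronglyMeasurable (μ := volume) (measurableSet_singleton 0).compl
  exact hGv.comp_measurePreserving (volume.measurePreserving_sub_left t)

theorem integrable_convolution (hGc : ∀ v, ContinuousOn (fun u ↦ G u v) {0}ᶜ)
    (hG : ∀ u, ‖G u‖ ≤ K * q ^ |u|) (hq : q ∈ Ioo 0 1) (hy : AEStronglyMeasurable y)
    (hyC : ∀ᵐ τ, ‖y τ‖ ≤ C) (t : ℝ) : Integrable fun τ ↦ G (t - τ) (y τ) := by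
  have hbound : Integrable fun τ : ℝ ↦ K * q ^ |t - τ| * C :=
    ((integrable_rpow_abs hq.1 hq.2).comp_sub_left t).const_mul K |>.mul_const C
  exact hbound.mono' (aestronglyMeasurable_convolution hGc hy t)
    (hyC.mono fun τ hτ ↦ norm_apply_le_of_norm_le_rpow hG hτ (t - τ))

variable [NormedSpace ℝ F]

theorem norm_convolution_le (hG : ∀ u, ‖G u‖ ≤ K * q ^ |u|) (hq : q ∈ Ioo 0 1)
    (hyC : ∀ᵐ τ, ‖y τ‖ ≤ C) (t : ℝ) :
    ‖∫ τ, G (t - τ) (y τ)‖ ≤ ∫ u : ℝ, K * q ^ |u| * C := by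
  rw [← integral_sub_left_eq_self (fun u ↦ K * q ^ |u| * C) volume t]
  refine norm_integral_le_of_norm_le ?_
    (hyC.mono fun τ hτ ↦ norm_apply_le_of_norm_le_rpow hG hτ (t - τ))
  exact ((integrable_rpow_abs hq.1 hq.2).comp_sub_left t).const_mul K |>.mul_const C

theorem continuous_convolution (hGc : ∀ v, ContinuousOn (fun u ↦ G u v) {0}ᶜ)
    (hG : ∀ u, ‖G u‖ ≤ K * q ^ |u|) (hq : q ∈ Ioo 0 1) (hy : AEStronglyMeasurable y)
    (hyC : ∀ᵐ τ, ‖y τ‖ ≤ C) : Continuous fun t ↦ ∫ τ, G (t - τ) (y τ) := by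
  refine continuous_iff_continuousAt.2 fun t ↦ ?_
  have hK : 0 ≤ K := by simpa using (norm_nonneg _).trans (hG 0)
  refine continuousAt_of_dominated (bound := fun τ ↦ K * (q⁻¹ * q ^ |t - τ|) * C)
    (.of_forall (aestronglyMeasurable_convolution hGc hy)) ?_ ?_ ?_
  · filter_upwards [Metric.closedBall_mem_nhds t one_pos] with s hs
    filter_upwards [hyC] with τ hτ
    have hC : 0 ≤ C := (norm_nonneg _).trans hτ
    have hsτ := rpow_abs_sub_le hq.1 hq.2.le hs τ
    exact (norm_apply_le_of_norm_le_rpow hG hτ (s - τ)).trans (by gcongr)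
  · exact (((integrable_rpow_abs hq.1 hq.2).comp_sub_left t).const_mul _).const_mul K |>.mul_const C
  · filter_upwards [compl_mem_ae_iff.2 (measure_singleton t)] with τ hτ
    have hne : t - τ ∈ ({0}ᶜ : Set ℝ) := sub_ne_zero.2 (Ne.symm hτ)
    exact ((hGc (y τ)).continuousAt (isOpen_compl_singleton.mem_nhds hne)).comp (f := fun s ↦ s - τ)
      (by fun_prop)

end Convolution

section Semigroup

variable {𝕜 X : Type*} [NontriviallyNormedField 𝕜] [NormedAddCommGroup X] [NormedSpace 𝕜 X]

/-- A C₀-semigroup on `X`. Times are real numbers, and the values at negative times are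
unconstrained. -/
structure IsC0Semigroup (T : ℝ → X →L[𝕜] X) : Prop where
  map_zero : T 0 = 1
  map_add : ∀ s t : ℝ, 0 ≤ s → 0 ≤ t → T (s + t) = T s * T t
  continuousOn_apply : ∀ v : X, ContinuousOn (fun t ↦ T t v) (Ici 0)

/-- `S` restricts to a C₀-group on the range of `Q` which extends the restriction of the semigroup
`T`; for `Q = P_out` this is the group `T_out`. Each `S t` is an operator on all of `X` commuting
with `Q`, and the group law is only required after composing with `Q`. -/
structure IsGroupOnRange (T : ℝ → X →L[𝕜] X) (Q : X →L[𝕜] X) (S : ℝ → X →L[𝕜] X) : Prop where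
  continuous_apply : ∀ v : X, Continuous fun t ↦ S t v
  commute : ∀ t : ℝ, Commute (S t) Q
  mul_eq_of_nonneg : ∀ t : ℝ, 0 ≤ t → S t * Q = T t * Q
  map_add_mul : ∀ s t : ℝ, S (s + t) * Q = S s * (S t * Q)

/-- The Green function `G` of a semigroup `T` with projection `P = P_in` and group `S = T_out` on
the range of `1 - P`. -/
noncomputable def greenFunction (T S : ℝ → X →L[𝕜] X) (P : X →L[𝕜] X) (t : ℝ) : X →L[𝕜] X :=
  if 0 ≤ t then -(T t * P) else S t * (1 - P)

variable {T S : ℝ → X →L[𝕜] X} {P Q : X →L[𝕜] X}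

theorem IsC0Semigroup.map_natCast (hT : IsC0Semigroup T) (n : ℕ) : T n = T 1 ^ n := by
  induction n with
  | zero => rw [Nat.cast_zero, hT.map_zero, pow_zero]
  | succ n ih => rw [Nat.cast_succ, hT.map_add _ _ n.cast_nonneg zero_le_one, ih, pow_succ]

theorem IsGroupOnRange.neg_mul_eq (hS : IsGroupOnRange T Q S) (hT : IsC0Semigroup T)
    (hQ : IsIdempotentElem Q) {t : ℝ} (ht : 0 ≤ t) (hTQ : Commute (T t) Q) {b : X →L[𝕜] X}
    (hb : T t * b = Q) : S (-t) * Q = Q * b :=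
  calc S (-t) * Q = S (-t) * (Q * (T t * b)) := by rw [hb, hQ.eq]
    _ = S (-t) * (S t * Q) * b := by
      rw [hS.mul_eq_of_nonneg t ht, hTQ.eq, mul_assoc, mul_assoc]
    _ = Q * b := by
      rw [← hS.map_add_mul, neg_add_cancel, hS.mul_eq_of_nonneg 0 le_rfl, hT.map_zero, one_mul]

theorem IsGroupOnRange.semigroup_mul (hS : IsGroupOnRange T Q S) {r : ℝ} (hr : 0 ≤ r) (u : ℝ) :
    T r * (S u * Q) = S (r + u) * Q := by
  rw [hS.map_add_mul, (hS.commute u).eq, ← mul_assoc, ← mul_assoc, hS.mul_eq_of_nonneg r hr]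

theorem pow_floor_le_rpow {q : ℝ} (hq0 : 0 < q) (hq1 : q ≤ 1) (t : ℝ) :
    q ^ ⌊t⌋₊ ≤ q⁻¹ * q ^ t := by
  rw [← Real.rpow_natCast, ← Real.rpow_neg_one, ← Real.rpow_add hq0]
  exact Real.rpow_le_rpow_of_exponent_ge hq0 hq1 (by linarith [Nat.lt_floor_add_one t])

theorem exists_norm_le_rpow_of_eq_mul_floor [CompleteSpace X] {f : ℝ → X →L[𝕜] X}
    (hf : ∀ v, ContinuousOn (fun t ↦ f t v) (Icc 0 1)) {g : ℝ → X →L[𝕜] X} {c : ℕ → X →L[𝕜] X}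
    (hg : ∀ t, 0 ≤ t → ∃ r ∈ Icc (0 : ℝ) 1, g t = f r * c ⌊t⌋₊) {C q : ℝ} (hq0 : 0 < q)
    (hq1 : q ≤ 1) (hc : ∀ n, ‖c n‖ ≤ C * q ^ n) :
    ∃ K, ∀ t, 0 ≤ t → ‖g t‖ ≤ K * q ^ t := by
  obtain ⟨M, hM⟩ := exists_norm_le_of_continuousOn_apply isCompact_Icc hf
  have hM0 : 0 ≤ M := (norm_nonneg _).trans (hM 0 ⟨le_rfl, zero_le_one⟩)
  have hC0 : 0 ≤ C := by simpa using (norm_nonneg _).trans (hc 0)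
  refine ⟨M * C * q⁻¹, fun t ht ↦ ?_⟩
  obtain ⟨r, hr, hgt⟩ := hg t ht
  calc ‖g t‖ ≤ M * (C * q ^ ⌊t⌋₊) := hgt ▸ norm_mul_le_of_le (hM r hr) (hc _)
    _ ≤ M * (C * (q⁻¹ * q ^ t)) := by gcongr; exact pow_floor_le_rpow hq0 hq1 t
    _ = M * C * q⁻¹ * q ^ t := by ring

theorem IsC0Semigroup.exists_norm_mul_le [CompleteSpace X] (hT : IsC0Semigroup T) {C q : ℝ}
    (hq0 : 0 < q) (hq1 : q ≤ 1) (hP : ∀ n : ℕ, ‖T n * P‖ ≤ C * q ^ n) :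
    ∃ K, ∀ t, 0 ≤ t → ‖T t * P‖ ≤ K * q ^ t := by
  refine exists_norm_le_rpow_of_eq_mul_floor
    (fun v ↦ (hT.continuousOn_apply v).mono Icc_subset_Ici_self) (fun t ht ↦ ?_) hq0 hq1 hP
  have hfloor : (⌊t⌋₊ : ℝ) ≤ t := Nat.floor_le ht
  refine ⟨t - ⌊t⌋₊, ⟨sub_nonneg.2 hfloor, by linarith [Nat.lt_floor_add_one t]⟩, ?_⟩
  rw [← mul_assoc, ← hT.map_add _ _ (sub_nonneg.2 hfloor) (Nat.cast_nonneg _), sub_add_cancel]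

theorem IsGroupOnRange.exists_norm_neg_mul_le [CompleteSpace X] (hS : IsGroupOnRange T Q S)
    {C q : ℝ} (hq0 : 0 < q) (hq1 : q ≤ 1) (hQ : ∀ n : ℕ, ‖S (-(n + 1 : ℕ)) * Q‖ ≤ C * q ^ n) :
    ∃ K, ∀ t, 0 ≤ t → ‖S (-t) * Q‖ ≤ K * q ^ t := by
  refine exists_norm_le_rpow_of_eq_mul_floor (fun v ↦ (hS.continuous_apply v).continuousOn)
    (fun t ht ↦ ⟨(⌊t⌋₊ + 1 : ℕ) - t, ?_, ?_⟩) hq0 hq1 hQ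
  · push_cast
    constructor <;> linarith [Nat.floor_le ht, Nat.lt_floor_add_one t]
  · rw [← hS.map_add_mul]
    congr 2
    ring

theorem norm_greenFunction_le_of_half_lines {q K L : ℝ}
    (hT : ∀ t, 0 ≤ t → ‖T t * P‖ ≤ K * q ^ t) (hS : ∀ t, 0 ≤ t → ‖S (-t) * (1 - P)‖ ≤ L * q ^ t)
    (hq : 0 ≤ q) (u : ℝ) : ‖greenFunction T S P u‖ ≤ max K L * q ^ |u| := by
  rw [greenFunction]
  split_ifs with hu
  · rw [norm_neg, abs_of_nonneg hu]
    exact (hT u hu).trans (by gcongr; exact le_max_left K L)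
  · have hu' : 0 ≤ -u := (neg_pos.2 (not_le.1 hu)).le
    rw [abs_of_neg (not_le.1 hu)]
    simpa only [neg_neg] using (hS (-u) hu').trans (by gcongr; exact le_max_right K L)

theorem continuousOn_greenFunction_apply (hT : IsC0Semigroup T) (hS : IsGroupOnRange T (1 - P) S)
    (v : X) : ContinuousOn (fun u ↦ greenFunction T S P u v) {0}ᶜ := by
  rw [← Iio_union_Ioi]
  refine ContinuousOn.union_of_isOpen ?_ ?_ isOpen_Iio isOpen_Ioi
  · refine (hS.continuous_apply ((1 - P) v)).continuousOn.congr fun u hu ↦ ?_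
    rw [greenFunction, if_neg (not_le.2 hu), mul_apply_eq_comp]
  · refine ((hT.continuousOn_apply (P v)).mono Ioi_subset_Ici_self).fun_neg.congr fun u hu ↦ ?_
    rw [greenFunction, if_pos hu.le, neg_apply,
      mul_apply_eq_comp]

theorem greenFunction_add_sub (hT : IsC0Semigroup T) (hS : IsGroupOnRange T (1 - P) S) {r : ℝ}
    (hr : 0 ≤ r) (u : ℝ) : greenFunction T S P (r + u) - T r * greenFunction T S P u =
      (Ico (-r) 0).indicator (fun u ↦ -T (r + u)) u := by
  rcases le_or_gt 0 u with hu | hu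
  · rw [indicator_of_notMem fun h ↦ h.2.not_ge hu, greenFunction, greenFunction,
      if_pos (add_nonneg hr hu), if_pos hu, hT.map_add r u hr hu, mul_neg, mul_assoc, sub_self]
  · rw [greenFunction.eq_def T S P u, if_neg hu.not_ge, hS.semigroup_mul hr]
    rcases le_or_gt 0 (r + u) with hru | hru
    · rw [indicator_of_mem (show u ∈ Ico (-r) 0 from ⟨by linarith, hu⟩), greenFunction,
        if_pos hru, hS.mul_eq_of_nonneg _ hru, mul_sub, mul_one]
      abel
    · rw [indicator_of_notMem fun h ↦ by linarith [h.1], greenFunction, if_neg hru.not_ge,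
        sub_self]

end Semigroup

section MildSolution

theorem integral_greenFunction_sub {𝕜 X : Type*} [RCLike 𝕜] [NormedAddCommGroup X]
    [NormedSpace 𝕜 X] [NormedSpace ℝ X] [CompleteSpace X] {T S : ℝ → X →L[𝕜] X} {P : X →L[𝕜] X}
    (hT : IsC0Semigroup T) (hS : IsGroupOnRange T (1 - P) S) {y : ℝ → X} {s t : ℝ} (hst : s ≤ t)
    (hint : ∀ t, Integrable fun τ ↦ greenFunction T S P (t - τ) (y τ)) :
    (∫ τ, greenFunction T S P (t - τ) (y τ)) - T (t - s) (∫ τ, greenFunction T S P (s - τ) (y τ)) =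
      -∫ τ in s..t, T (t - τ) (y τ) := by
  have hjump (τ : ℝ) : greenFunction T S P (t - τ) (y τ) -
      T (t - s) (greenFunction T S P (s - τ) (y τ)) =
      (Ioc s t).indicator (fun τ ↦ -T (t - τ) (y τ)) τ := by
    have h := DFunLike.congr_fun (greenFunction_add_sub hT hS (sub_nonneg.2 hst) (s - τ)) (y τ)
    have hmem : s - τ ∈ Ico (-(t - s)) 0 ↔ τ ∈ Ioc s t := by
      constructor <;> rintro ⟨h₁, h₂⟩ <;> constructor <;> linarith
    rw [sub_add_sub_cancel] at h
    by_cases hτ : τ ∈ Ioc s t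
    · rw [indicator_of_mem (hmem.2 hτ), sub_add_sub_cancel] at h
      rw [indicator_of_mem hτ]
      exact h
    · rw [indicator_of_notMem (mt hmem.1 hτ)] at h
      rw [indicator_of_notMem hτ]
      exact h
  rw [← (T (t - s)).integral_comp_comm (hint s),
    ← integral_sub (hint t) ((T (t - s)).integrable_comp (hint s)),
    integral_congr_ae (.of_forall hjump), integral_indicator measurableSet_Ioc, integral_neg,
    intervalIntegral.integral_of_le hst]

variable {X : Type*} [NormedAddCommGroup X] [NormedSpace ℂ X] [CompleteSpace X]
  {T S : ℝ → X →L[ℂ] X}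

theorem exists_norm_greenFunction_le (hT : IsC0Semigroup T)
    (hhyp : Metric.sphere (0 : ℂ) 1 ⊆ resolventSet ℂ (T 1))
    (hS : IsGroupOnRange T (1 - rieszProjection (T 1) 1) S) :
    ∃ q ∈ Ioo (0 : ℝ) 1, ∃ K, ∀ u,
      ‖greenFunction T S (rieszProjection (T 1) 1) u‖ ≤ K * q ^ |u| := by
  obtain ⟨q, hq, C, hC⟩ := exists_norm_pow_mul_rieszProjection_le hhyp
  set P := rieszProjection (T 1) 1
  have hback (n : ℕ) : S (-(n + 1 : ℕ)) * (1 - P) =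
      (1 - P) * -resolventMoment (T 1) 1 (-1 - n) := by
    refine hS.neg_mul_eq hT (isIdempotentElem_rieszProjection hhyp).one_sub
      (Nat.cast_nonneg _) ?_ ?_
    · rw [hT.map_natCast]
      exact (Commute.one_right _).sub_right
        (commute_rieszProjection (Commute.pow_self _ _) one_pos hhyp)
    · rw [hT.map_natCast, mul_neg, pow_succ_mul_resolventMoment_neg one_pos hhyp, neg_sub]
  obtain ⟨K, hK⟩ := hT.exists_norm_mul_le hq.1 hq.2.le (P := P) (C := C) fun n ↦ by
    rw [hT.map_natCast]
    exact (hC n).1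
  obtain ⟨L, hL⟩ := hS.exists_norm_neg_mul_le hq.1 hq.2.le (C := ‖1 - P‖ * C) fun n ↦ by
    rw [hback, mul_assoc]
    exact norm_mul_le_of_le le_rfl (norm_neg (resolventMoment (T 1) 1 _) ▸ (hC n).2)
  exact ⟨q, hq, max K L, norm_greenFunction_le_of_half_lines hK hL hq.1.le⟩

theorem stmt13_general (hT : IsC0Semigroup T)
    (hhyp : Metric.sphere (0 : ℂ) 1 ⊆ resolventSet ℂ (T 1))
    (hS : IsGroupOnRange T (1 - rieszProjection (T 1) 1) S) {y : ℝ → X}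
    (hy : AEStronglyMeasurable y) (hyb : ∃ C, ∀ᵐ t, ‖y t‖ ≤ C) {x : ℝ → X}
    (hx : ∀ t, x t = ∫ τ, greenFunction T S (rieszProjection (T 1) 1) (t - τ) (y τ)) :
    Continuous x ∧ (∃ C, ∀ t, ‖x t‖ ≤ C) ∧
      ∀ s t : ℝ, s ≤ t → x t - T (t - s) (x s) = -∫ τ in s..t, T (t - τ) (y τ) := by
  obtain ⟨C, hC⟩ := hyb
  obtain ⟨q, hq, K, hK⟩ := exists_norm_greenFunction_le hT hhyp hS
  have hGc := continuousOn_greenFunction_apply hT hS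
  obtain rfl : x = _ := funext hx
  exact ⟨continuous_convolution hGc hK hq hy hC, ⟨_, norm_convolution_le hK hq hC⟩,
    fun s t hst ↦ integral_greenFunction_sub hT hS hst (integrable_convolution hGc hK hq hy hC)⟩

end MildSolution

open ContinuousLinearMap in
/-- Surjectivity of the mild parabolic operator for a hyperbolic semigroup:
`x = G∗y` is a bounded continuous function with `𝓛x = y`. -/
theorem stmt13 {X : Type*} [NormedAddCommGroup X] [NormedSpace ℂ X] [CompleteSpace X]
    (T : ℝ → X →L[ℂ] X)
    (hT0 : T 0 = 1)
    (hTadd : ∀ s t : ℝ, 0 ≤ s → 0 ≤ t → T (s + t) = T s ∘L T t)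
    (hTcont : ∀ x : X, ContinuousOn (fun t => T t x) (Set.Ici (0 : ℝ)))
    (hhyp : ∀ z ∈ Metric.sphere (0 : ℂ) 1, z ∉ spectrum ℂ (T 1))
    (P : X →L[ℂ] X)
    (hP : P = (2 * (Real.pi : ℂ) * Complex.I)⁻¹ •
      ∮ z in C(0, 1), Ring.inverse (z • (1 : X →L[ℂ] X) - T 1))
    (S : ℝ → X →L[ℂ] X)
    (hScont : ∀ x : X, Continuous fun t => S t x)
    (hScomm : ∀ t : ℝ, S t ∘L (1 - P) = (1 - P) ∘L S t)
    (hST : ∀ t : ℝ, 0 ≤ t → S t ∘L (1 - P) = T t ∘L (1 - P))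
    (hSgrp : ∀ s t : ℝ, S (s + t) ∘L (1 - P) = S s ∘L (S t ∘L (1 - P)))
    (hSinv : ∀ t : ℝ, S t ∘L (S (-t) ∘L (1 - P)) = 1 - P)
    (G : ℝ → X →L[ℂ] X)
    (hG : ∀ t : ℝ, G t = if 0 ≤ t then -(T t ∘L P) else S t ∘L (1 - P))
    (y : ℝ → X) (hy : Continuous y) (hyb : ∃ C, ∀ t, ‖y t‖ ≤ C)
    (x : ℝ → X) (hx : ∀ t : ℝ, x t = ∫ τ : ℝ, G (t - τ) (y τ)) :
    Continuous x ∧ (∃ C, ∀ t, ‖x t‖ ≤ C) ∧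
      ∀ s t : ℝ, s ≤ t →
        x t - T (t - s) (x s) = -∫ τ in s..t, T (t - τ) (y τ) := by
  obtain rfl : P = rieszProjection (T 1) 1 := by
    simpa only [rieszProjection, resolvent, Algebra.algebraMap_eq_smul_one] using hP
  obtain rfl : G = greenFunction T S (rieszProjection (T 1) 1) := funext hG
  exact stmt13_general ⟨hT0, hTadd, hTcont⟩ (fun z hz ↦ not_not.1 (hhyp z hz))
    ⟨hScont, hScomm, hST, hSgrp⟩ hy.aestronglyMeasurable
    (hyb.imp fun _ h ↦ .of_forall h) hx
end

section
/- Let 𝓧 be a nondegenerate Banach L¹(ℝ)-module and let x ∈ 𝓧 have empty Beurling spectrum Λ(x) = ∅. Then x = 0. -/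
open MeasureTheory

/-- The Fourier transform `f̂(λ) = ∫ f(t)e^{−itλ}dt`. -/
noncomputable def fhat (f : ℝ → ℂ) (l : ℝ) : ℂ :=
  ∫ t : ℝ, f t * Complex.exp (-(Complex.I * t * l))

/-- The Beurling spectrum of `x` with respect to a module action `act` of `L¹(ℝ)`:
the complement of `{λ : ∃ f ∈ L¹, f̂(λ) ≠ 0 ∧ fx = 0}`. -/
def BeurlingSpectrum {𝓧 : Type*} [NormedAddCommGroup 𝓧] [NormedSpace ℂ 𝓧]
    (act : (ℝ → ℂ) → 𝓧 → 𝓧) (x : 𝓧) : Set ℝ :=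
  {l : ℝ | ∃ f : ℝ → ℂ, Integrable f ∧ fhat f l ≠ 0 ∧ act f x = 0}ᶜ

/-!
For a fixed `x`, the map `φ ↦ act (𝓕⁻ φ) x` is a vector-valued distribution. Suppose `act f x = 0`
and `𝓕 f ξ ≠ 0`. On functions whose Fourier transform is concentrated near `ξ`, convolution by `f`
is `L¹`-close to multiplication by the scalar `𝓕 f ξ`. So if `φ` is supported near `ξ`, then
`y = act (𝓕⁻ φ) x` satisfies both `act f y = 0` and `‖act f y - 𝓕 f ξ • y‖ ≤ ε * ‖y‖` with
`ε < ‖𝓕 f ξ‖`, which forces `y = 0`: the point `ξ` is not in the support. If this happens at every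
`ξ`, a smooth partition of unity shows that the distribution kills every compactly supported `φ`,
and an approximate identity with compactly supported Fourier transform then shows that every `f`
kills `x`. This localization replaces the appeal to Wiener's Tauberian theorem.
-/

open Filter ContinuousLinearMap Distribution
open scoped Convolution FourierTransform SchwartzMap Topology ContDiff Manifold

section TranslationModulus

variable {G F : Type*} [AddGroup G] [MeasurableSpace G] [NormedAddCommGroup F]
  {μ : Measure G} {f : G → F}

/-- The `L¹` modulus of continuity of `f`: the `L¹`-distance from `f` to its translate by `h`. -/
noncomputable def translationModulus (μ : Measure G) (f : G → F) (h : G) : ℝ :=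
  ∫ u, ‖f (u - h) - f u‖ ∂μ

@[simp]
theorem translationModulus_zero : translationModulus μ f 0 = 0 := by
  simp [translationModulus]

theorem norm_translationModulus_le [MeasurableAdd G] [μ.IsAddRightInvariant]
    (hf : Integrable f μ) (h : G) :
    ‖translationModulus μ f h‖ ≤ 2 * ∫ u, ‖f u‖ ∂μ := by
  have hfh : Integrable (fun u => f (u - h)) μ := hf.comp_sub_right h
  calc ‖translationModulus μ f h‖ = ∫ u, ‖f (u - h) - f u‖ ∂μ :=
        Real.norm_of_nonneg (integral_nonneg fun _ => norm_nonneg _)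
    _ ≤ ∫ u, (‖f (u - h)‖ + ‖f u‖) ∂μ :=
        integral_mono (hfh.sub hf).norm (hfh.norm.add hf.norm) fun _ => norm_sub_le _ _
    _ = 2 * ∫ u, ‖f u‖ ∂μ := by
        rw [integral_add hfh.norm hf.norm, integral_sub_right_eq_self (fun u => ‖f u‖) h, two_mul]

theorem continuous_translationModulus [TopologicalSpace G] [IsTopologicalAddGroup G]
    [BorelSpace G] [R1Space G] [μ.IsAddRightInvariant] [IsLocallyFiniteMeasure μ]
    [μ.InnerRegularCompactLTTop] (hf : Integrable f μ) :
    Continuous (translationModulus μ f) := by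
  have hpres (h : G) : MeasurePreserving (fun u => u - h) μ μ := measurePreserving_sub_right μ h
  let shift (h : G) : C(G, G) := ⟨fun u => u - h, by fun_prop⟩
  have hshift : Continuous shift := ContinuousMap.continuous_of_continuous_uncurry _
    (continuous_snd.sub continuous_fst : Continuous fun p : G × G => p.2 - p.1)
  have hfL : MemLp f 1 μ := memLp_one_iff_integrable.2 hf
  have hcont : Continuous fun h => Lp.compMeasurePreserving (shift h) (hpres h) (hfL.toLp f) :=
    continuous_const.compMeasurePreservingLp hshift _ ENNReal.one_ne_top
  refine (hcont.sub (continuous_const (y := hfL.toLp f))).norm.congr fun h => ?_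
  rw [Pi.sub_apply, Lp.toLp_compMeasurePreserving, ← MemLp.toLp_sub]
  exact L1.norm_of_fun_eq_integral_norm ((hf.comp_sub_right h).sub hf)

end TranslationModulus

section ConvolutionError

variable {𝕜 G F₁ F₂ F₃ : Type*} [RCLike 𝕜]
  [NormedAddCommGroup F₁] [NormedAddCommGroup F₂] [NormedAddCommGroup F₃]
  [NormedSpace 𝕜 F₁] [NormedSpace 𝕜 F₂] [NormedSpace 𝕜 F₃]
  [AddGroup G] [MeasurableSpace G] [MeasurableAdd₂ G] [MeasurableNeg G]
  {μ : Measure G} [SFinite μ] [μ.IsAddRightInvariant] {K : G → F₁} {f : G → F₂}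

theorem integrable_norm_mul_norm_sub [NormedSpace ℝ F₂]
    (hK : Integrable K μ) (hf : Integrable f μ) :
    Integrable (fun p : G × G => ‖K p.2‖ * ‖f (p.1 - p.2) - f p.1‖) (μ.prod μ) := by
  have hshift : Integrable (fun p : G × G => ‖K p.2‖ • f (p.1 - p.2)) (μ.prod μ) :=
    hK.norm.convolution_integrand (lsmul ℝ ℝ) hf
  have hconst : Integrable (fun p : G × G => ‖K p.2‖ • f p.1) (μ.prod μ) :=
    (hK.norm.smul_prod hf).swap
  refine (hshift.sub hconst).norm.congr (Eventually.of_forall fun p => ?_)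
  simp only [Pi.sub_apply, ← smul_sub, norm_smul, norm_norm]

theorem integral_norm_convolution_sub_le [NormedSpace ℝ F₁] [NormedSpace ℝ F₂] [NormedSpace ℝ F₃]
    [CompleteSpace F₁] [CompleteSpace F₃]
    (L : F₁ →L[𝕜] F₂ →L[𝕜] F₃) (hK : Integrable K μ) (hf : Integrable f μ) :
    ∫ t, ‖(K ⋆[L, μ] f) t - L (∫ s, K s ∂μ) (f t)‖ ∂μ ≤
      ‖L‖ * ∫ s, ‖K s‖ * translationModulus μ f s ∂μ := by
  let D (t s : G) : ℝ := ‖K s‖ * ‖f (t - s) - f t‖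
  have hD : Integrable (Function.uncurry D) (μ.prod μ) := integrable_norm_mul_norm_sub hK hf
  have hpointwise : ∀ᵐ t ∂μ,
      ‖(K ⋆[L, μ] f) t - L (∫ s, K s ∂μ) (f t)‖ ≤ ‖L‖ * ∫ s, D t s ∂μ := by
    filter_upwards [hK.ae_convolution_exists L hf, hD.prod_right_ae] with t ht hDt
    have hmean : ∫ s, L (K s) (f t) ∂μ = L (∫ s, K s ∂μ) (f t) :=
      (L.flip (f t)).integral_comp_comm hK
    have hL : Integrable (fun s => L (K s) (f t)) μ := (L.flip (f t)).integrable_comp hK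
    rw [convolution_def, ← hmean, ← integral_sub ht hL, ← integral_const_mul]
    refine norm_integral_le_of_norm_le (hDt.const_mul ‖L‖) (Eventually.of_forall fun s => ?_)
    rw [← map_sub, ← mul_assoc]
    exact L.le_opNorm₂ _ _
  calc ∫ t, ‖(K ⋆[L, μ] f) t - L (∫ s, K s ∂μ) (f t)‖ ∂μ
      ≤ ∫ t, ‖L‖ * ∫ s, D t s ∂μ ∂μ :=
        integral_mono_of_nonneg (Eventually.of_forall fun _ => norm_nonneg _)
          (hD.integral_prod_left.const_mul ‖L‖) hpointwise
    _ = ‖L‖ * ∫ s, ∫ t, D t s ∂μ ∂μ := by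
        rw [integral_const_mul, integral_integral_swap hD]
    _ = ‖L‖ * ∫ s, ‖K s‖ * translationModulus μ f s ∂μ := by
        simp only [D, integral_const_mul, translationModulus]

end ConvolutionError

section Dilation

variable {E F : Type*} [NormedAddCommGroup E] [NormedSpace ℝ E]
  [NormedAddCommGroup F] [NormedSpace ℝ F] {r : ℝ}

/-- The dilation of `g` by the factor `r`, normalized so that it preserves the integral. As `r → ∞`
the dilates of `g` concentrate at the origin. -/
noncomputable def dilate (r : ℝ) (g : E → F) (t : E) : F :=
  r ^ Module.finrank ℝ E • g (r • t)

theorem dilate_dilate_inv (hr : r ≠ 0) (g : E → F) : dilate r (dilate r⁻¹ g) = g := by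
  ext t
  simp only [dilate]
  rw [smul_smul, smul_smul, ← mul_pow, mul_inv_cancel₀ hr, one_pow, one_smul, inv_mul_cancel₀ hr,
    one_smul]

theorem norm_dilate (hr : 0 ≤ r) (g : E → F) (t : E) :
    ‖dilate r g t‖ = dilate r (fun t => ‖g t‖) t := by
  simp only [dilate, norm_smul, norm_pow, Real.norm_of_nonneg hr, smul_eq_mul]

variable [FiniteDimensional ℝ E] [MeasurableSpace E] [BorelSpace E]
  {μ : Measure E} [μ.IsAddHaarMeasure]

theorem integrable_dilate {g : E → F} (hg : Integrable g μ) (hr : r ≠ 0) :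
    Integrable (dilate r g) μ :=
  (hg.comp_smul hr).smul _

theorem integral_dilate (hr : 0 < r) (g : E → F) : ∫ t, dilate r g t ∂μ = ∫ t, g t ∂μ := by
  simp only [dilate]
  rw [integral_smul, Measure.integral_comp_smul_of_nonneg _ _ _ (hR := hr.le),
    smul_inv_smul₀ (pow_pos hr _).ne']

theorem integral_norm_dilate (hr : 0 < r) (g : E → F) :
    ∫ t, ‖dilate r g t‖ ∂μ = ∫ t, ‖g t‖ ∂μ := by
  simp only [norm_dilate hr.le, integral_dilate hr]

theorem integral_norm_dilate_mul (hr : 0 < r) (K : E → F) (w : E → ℝ) :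
    ∫ s, ‖dilate r K s‖ * w s ∂μ = ∫ s, ‖K s‖ * w (r⁻¹ • s) ∂μ := by
  rw [← integral_dilate hr fun s => ‖K s‖ * w (r⁻¹ • s)]
  congr 1 with s
  rw [norm_dilate hr.le, dilate, dilate, inv_smul_smul₀ hr.ne', smul_eq_mul, smul_eq_mul, mul_assoc]

theorem dilate_convolution {𝕜 F₁ F₂ : Type*} [RCLike 𝕜] [NormedAddCommGroup F₁]
    [NormedAddCommGroup F₂] [NormedSpace 𝕜 F₁] [NormedSpace 𝕜 F₂] [NormedSpace 𝕜 F]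
    [NormedSpace ℝ F₁] [NormedSpace ℝ F₂]
    (L : F₁ →L[𝕜] F₂ →L[𝕜] F) (hr : 0 < r) (f : E → F₁) (g : E → F₂) :
    dilate r (f ⋆[L, μ] g) = dilate r f ⋆[L, μ] dilate r g := by
  ext t
  have hscale (s : E) : L (dilate r f s) (dilate r g (t - s)) =
      dilate r (fun s => r ^ Module.finrank ℝ E • L (f s) (g (r • t - s))) s := by
    have hleft : L (r ^ Module.finrank ℝ E • f (r • s)) = r ^ Module.finrank ℝ E • L (f (r • s)) :=
      map_real_smul L L.continuous _ _
    simp only [dilate, smul_sub, hleft, smul_apply]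
    rw [map_real_smul (L (f (r • s))) (L (f (r • s))).continuous]
  simp only [convolution_def, hscale]
  rw [integral_dilate hr, integral_smul, dilate, convolution_def]

end Dilation

section Modulation

variable {E F : Type*} [NormedAddCommGroup E] [InnerProductSpace ℝ E]
  [NormedAddCommGroup F] [NormedSpace ℂ F]

/-- The modulation of `g` by the frequency `ξ`, i.e. its product with the character of
frequency `ξ`; on the Fourier side it is the translation by `ξ`. -/
noncomputable def modulate (ξ : E) (g : E → F) (t : E) : F :=
  𝐞 (inner ℝ t ξ) • g t

@[simp]
theorem modulate_zero (g : E → F) : modulate (0 : E) g = g := by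
  ext t
  simp [modulate]

theorem modulate_modulate_neg (ξ : E) (g : E → F) : modulate ξ (modulate (-ξ) g) = g := by
  ext t
  simp only [modulate]
  rw [smul_smul, ← AddChar.map_add_eq_mul, ← inner_add_right, add_neg_cancel, inner_zero_right,
    AddChar.map_zero_eq_one, one_smul]

@[simp]
theorem norm_modulate (ξ : E) (g : E → F) (t : E) : ‖modulate ξ g t‖ = ‖g t‖ :=
  Circle.norm_smul _ _

variable [MeasurableSpace E]

theorem integrable_modulate [BorelSpace E] {μ : Measure E} {g : E → F}
    (hg : Integrable g μ) (ξ : E) : Integrable (modulate ξ g) μ := by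
  simpa only [inner_neg_right, neg_neg, modulate] using!
    (Real.fourierIntegral_convergent_iff (-ξ)).2 hg

theorem modulate_convolution {μ : Measure E} {F₁ F₂ : Type*} [NormedAddCommGroup F₁]
    [NormedAddCommGroup F₂] [NormedSpace ℂ F₁] [NormedSpace ℂ F₂]
    (L : F₁ →L[ℂ] F₂ →L[ℂ] F) (ξ : E) (f : E → F₁) (g : E → F₂) :
    modulate ξ (f ⋆[L, μ] g) = modulate ξ f ⋆[L, μ] modulate ξ g := by
  ext t
  have hchar (s : E) : L (modulate ξ f s) (modulate ξ g (t - s)) =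
      (𝐞 (inner ℝ t ξ) : ℂ) • L (f s) (g (t - s)) := by
    simp only [modulate, Circle.smul_def, map_smul, smul_apply]
    rw [smul_smul, ← Circle.coe_mul, ← AddChar.map_add_eq_mul, ← inner_add_left, sub_add_cancel]
  simp only [convolution_def, hchar]
  rw [integral_smul, modulate, Circle.smul_def, convolution_def]

theorem fourier_eq_integral_modulate [FiniteDimensional ℝ E] [BorelSpace E] (f : E → F) (ξ : E) :
    𝓕 f ξ = ∫ t, modulate (-ξ) f t := by
  simp only [Real.fourier_eq, modulate, inner_neg_right]

end Modulation

section ApproximateIdentity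

variable {E : Type*} [NormedAddCommGroup E] [NormedSpace ℝ E] [FiniteDimensional ℝ E]
  [MeasurableSpace E] [BorelSpace E] {μ : Measure E} [μ.IsAddHaarMeasure]
  {F₁ F₂ : Type*} [NormedAddCommGroup F₁] [NormedAddCommGroup F₂]
  [NormedSpace ℝ F₁] {K : E → F₁} {f : E → F₂}

theorem tendsto_integral_norm_dilate_mul_translationModulus
    (hK : Integrable K μ) (hf : Integrable f μ) :
    Tendsto (fun r : ℝ => ∫ s, ‖dilate r K s‖ * translationModulus μ f s ∂μ) atTop (𝓝 0) := by
  have hcont : Continuous (translationModulus μ f) := continuous_translationModulus hf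
  suffices h : Tendsto (fun r : ℝ => ∫ s, ‖K s‖ * translationModulus μ f (r⁻¹ • s) ∂μ) atTop
      (𝓝 (∫ s, ‖K s‖ * 0 ∂μ)) by
    simp only [mul_zero, integral_zero] at h
    refine h.congr' ?_
    filter_upwards [eventually_gt_atTop 0] with r hr
    rw [integral_norm_dilate_mul hr]
  refine tendsto_integral_filter_of_dominated_convergence
    (fun s => ‖K s‖ * (2 * ∫ u, ‖f u‖ ∂μ)) (Eventually.of_forall fun r => ?_)
    (Eventually.of_forall fun r => Eventually.of_forall fun s => ?_) (hK.norm.mul_const _)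
    (Eventually.of_forall fun s => Tendsto.const_mul _ ?_)
  · exact hK.norm.aestronglyMeasurable.mul
      (hcont.comp (continuous_const_smul r⁻¹)).aestronglyMeasurable
  · rw [norm_mul, norm_norm]
    exact mul_le_mul_of_nonneg_left (norm_translationModulus_le hf _) (norm_nonneg _)
  · have hshrink : Tendsto (fun r : ℝ => r⁻¹ • s) atTop (𝓝 0) := by
      simpa only [zero_smul] using (tendsto_inv_atTop_zero (𝕜 := ℝ)).smul_const s
    exact (hcont.tendsto' 0 0 translationModulus_zero).comp hshrink

theorem tendsto_integral_norm_dilate_convolution_sub {𝕜 F₃ : Type*} [RCLike 𝕜]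
    [NormedAddCommGroup F₃] [NormedSpace 𝕜 F₁] [NormedSpace 𝕜 F₂] [NormedSpace 𝕜 F₃]
    [NormedSpace ℝ F₂] [NormedSpace ℝ F₃] [CompleteSpace F₁] [CompleteSpace F₃]
    (L : F₁ →L[𝕜] F₂ →L[𝕜] F₃) (hK : Integrable K μ) (hf : Integrable f μ) :
    Tendsto (fun r : ℝ => ∫ t, ‖(dilate r K ⋆[L, μ] f) t - L (∫ s, K s ∂μ) (f t)‖ ∂μ)
      atTop (𝓝 0) := by
  have hbound : Tendsto
      (fun r : ℝ => ‖L‖ * ∫ s, ‖dilate r K s‖ * translationModulus μ f s ∂μ) atTop (𝓝 0) := by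
    simpa only [mul_zero] using
      (tendsto_integral_norm_dilate_mul_translationModulus hK hf).const_mul ‖L‖
  refine squeeze_zero' (Eventually.of_forall fun r => integral_nonneg fun t => norm_nonneg _)
    ?_ hbound
  filter_upwards [eventually_gt_atTop 0] with r hr
  simpa only [integral_dilate hr] using
    integral_norm_convolution_sub_le L (integrable_dilate hK hr.ne') hf

end ApproximateIdentity

section FrequencyLocalization

variable {E : Type*} [NormedAddCommGroup E] [InnerProductSpace ℝ E] [FiniteDimensional ℝ E]
  [MeasurableSpace E] [BorelSpace E]
  {F₁ F₂ F₃ : Type*} [NormedAddCommGroup F₁] [NormedAddCommGroup F₂] [NormedAddCommGroup F₃]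
  [NormedSpace ℂ F₁] [NormedSpace ℂ F₂] [NormedSpace ℂ F₃] {f : E → F₁} {V : E → F₂}

theorem convolution_modulate_dilate (L : F₁ →L[ℂ] F₂ →L[ℂ] F₃) {r : ℝ} (hr : 0 < r) (ξ : E) :
    f ⋆[L] modulate ξ (dilate r V) =
      modulate ξ (dilate r (dilate r⁻¹ (modulate (-ξ) f) ⋆[L] V)) := by
  rw [dilate_convolution L hr, dilate_dilate_inv hr.ne', modulate_convolution,
    modulate_modulate_neg]

theorem tendsto_integral_norm_convolution_modulate_dilate_sub [CompleteSpace F₁] [CompleteSpace F₃]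
    (L : F₁ →L[ℂ] F₂ →L[ℂ] F₃) (hf : Integrable f) (hV : Integrable V) (ξ : E) :
    Tendsto (fun r : ℝ => ∫ t, ‖(f ⋆[L] modulate ξ (dilate r V)) t -
      L (𝓕 f ξ) (modulate ξ (dilate r V) t)‖) (𝓝[>] 0) (𝓝 0) := by
  have happrox := (tendsto_integral_norm_dilate_convolution_sub L
    (integrable_modulate hf (-ξ)) hV).comp tendsto_inv_nhdsGT_zero
  refine happrox.congr' ?_
  filter_upwards [self_mem_nhdsWithin] with r (hr : 0 < r)
  rw [Function.comp_apply, ← fourier_eq_integral_modulate, ← integral_norm_dilate hr,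
    convolution_modulate_dilate L hr]
  congr 1 with t
  rw [← norm_modulate ξ]
  congr 1
  simp only [modulate, dilate, Circle.smul_def, map_smul, smul_sub]
  rw [map_real_smul (L (𝓕 f ξ)) (L (𝓕 f ξ)).continuous]

end FrequencyLocalization

section SchwartzCutoffs

variable {E F : Type*} [NormedAddCommGroup E] [InnerProductSpace ℝ E]
  [NormedAddCommGroup F] [NormedSpace ℂ F]

/-- The Schwartz function `φ` rescaled by the factor `r` and recentred at `ξ`. -/
noncomputable def rescale (ξ : E) {r : ℝ} (hr : r ≠ 0) (φ : 𝓢(E, F)) : 𝓢(E, F) :=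
  SchwartzMap.compSubConstCLM ℂ ξ <| SchwartzMap.compCLMOfContinuousLinearEquiv ℂ
    (ContinuousLinearEquiv.smulLeft (Units.mk0 r hr)⁻¹) φ

theorem rescale_apply (ξ : E) {r : ℝ} (hr : r ≠ 0) (φ : 𝓢(E, F)) (y : E) :
    rescale ξ hr φ y = φ (r⁻¹ • (y - ξ)) :=
  rfl

theorem hasCompactSupport_rescale (ξ : E) {r : ℝ} (hr : r ≠ 0) {φ : 𝓢(E, F)}
    (hφ : HasCompactSupport φ) : HasCompactSupport (rescale ξ hr φ) :=
  hφ.comp_homeomorph ((Homeomorph.subRight ξ).trans (Homeomorph.smulOfNeZero r⁻¹ (inv_ne_zero hr)))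

variable [FiniteDimensional ℝ E]

variable (E) in
theorem exists_schwartzMap_hasCompactSupport_eventuallyEq_one :
    ∃ φ : 𝓢(E, ℂ), HasCompactSupport φ ∧ φ =ᶠ[𝓝 0] 1 := by
  let bump : ContDiffBump (0 : E) := ⟨1, 2, one_pos, one_lt_two⟩
  have hsupp : HasCompactSupport fun y => (bump y : ℂ) :=
    bump.hasCompactSupport.comp_left Complex.ofReal_zero
  have hsmooth : ContDiff ℝ ∞ fun y => (bump y : ℂ) :=
    Complex.ofRealCLM.contDiff.comp bump.contDiff
  refine ⟨hsupp.toSchwartzMap hsmooth, hsupp, ?_⟩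
  filter_upwards [bump.eventuallyEq_one] with y hy
  exact congrArg Complex.ofReal hy

variable [MeasurableSpace E] [BorelSpace E]

theorem fourierInv_comp_sub_right (f : E → F) (ξ : E) :
    𝓕⁻ (fun y => f (y - ξ)) = modulate ξ (𝓕⁻ f) := by
  ext t
  rw [modulate, Real.fourierInv_eq, Real.fourierInv_eq, ← integral_add_right_eq_self _ ξ,
    Circle.smul_def, ← integral_smul]
  congr 1 with y
  rw [add_sub_cancel_right, inner_add_left, AddChar.map_add_eq_mul, mul_comm, mul_smul,
    real_inner_comm t ξ, Circle.smul_def]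

theorem fourierInv_comp_inv_smul {r : ℝ} (hr : 0 < r) (f : E → F) :
    𝓕⁻ (fun y => f (r⁻¹ • y)) = dilate r (𝓕⁻ f) := by
  ext t
  rw [dilate, Real.fourierInv_eq, Real.fourierInv_eq,
    ← Measure.integral_comp_inv_smul_of_nonneg _ _ hr.le]
  congr 1 with y
  rw [inner_smul_left, inner_smul_right, conj_trivial, inv_mul_cancel_left₀ hr.ne']

theorem fourierInv_rescale (ξ : E) {r : ℝ} (hr : 0 < r) (φ : 𝓢(E, F)) :
    ⇑(𝓕⁻ (rescale ξ hr.ne' φ) : 𝓢(E, F)) = modulate ξ (dilate r (𝓕⁻ φ : 𝓢(E, F))) := by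
  rw [SchwartzMap.fourierInv_coe, SchwartzMap.fourierInv_coe, ← fourierInv_comp_inv_smul hr,
    ← fourierInv_comp_sub_right]
  rfl

theorem integral_fourierInv_schwartzMap [CompleteSpace F] (φ : 𝓢(E, F)) :
    ∫ t, (𝓕⁻ φ : 𝓢(E, F)) t = φ 0 := by
  rw [← modulate_zero (𝓕⁻ φ : 𝓢(E, F)), ← neg_zero, ← fourier_eq_integral_modulate,
    ← SchwartzMap.fourier_coe, FourierTransform.fourier_fourierInv_eq,
    neg_zero]

theorem fourierInv_convolution_fourierInv_of_mul_eq {φ ψ : 𝓢(E, ℂ)} (h : ∀ y, φ y * ψ y = ψ y) :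
    (𝓕⁻ φ : 𝓢(E, ℂ)) ⋆[mul ℂ ℂ] (𝓕⁻ ψ : 𝓢(E, ℂ)) = (𝓕⁻ ψ : 𝓢(E, ℂ)) := by
  let g : 𝓢(E, ℂ) := SchwartzMap.convolution (mul ℂ ℂ) (𝓕⁻ φ) (𝓕⁻ ψ)
  have hfourier : 𝓕 g = ψ := by
    ext y
    rw [SchwartzMap.fourier_convolution]
    simp [h]
  have hg : g = 𝓕⁻ ψ := by rw [← hfourier, FourierTransform.fourierInv_fourier_eq]
  ext t
  rw [← SchwartzMap.convolution_apply]
  exact DFunLike.congr_fun hg t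

end SchwartzCutoffs

section DistributionSupport

variable {E F M : Type*} [NormedAddCommGroup E] [NormedSpace ℝ E] [FiniteDimensional ℝ E]
  [NormedAddCommGroup F] [NormedSpace ℝ F] [AddCommMonoid M]

theorem exists_finset_sum_eq_of_tsupport_subset_iUnion {ι : Type*} {φ : 𝓢(E, F)}
    (hφ : HasCompactSupport φ) {U : ι → Set E} (hU : ∀ i, IsOpen (U i))
    (hcover : tsupport φ ⊆ ⋃ i, U i) :
    ∃ (s : Finset ι) (ψ : ι → 𝓢(E, F)), (∀ i, tsupport (ψ i) ⊆ U i) ∧ ∑ i ∈ s, ψ i = φ := by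
  obtain ⟨ρ, hρ⟩ := SmoothPartitionOfUnity.exists_isSubordinate 𝓘(ℝ, E)
    (isClosed_tsupport φ) U hU hcover
  let ψ (i : ι) : 𝓢(E, F) := HasCompactSupport.toSchwartzMap (f := fun y => ρ i y • φ y)
    hφ.smul_left ((ρ i).contMDiff.contDiff.smul (φ.smooth ⊤))
  have hψ (i : ι) (y : E) : ψ i y = ρ i y • φ y := rfl
  have hfin := ρ.locallyFinite.finite_nonempty_inter_compact hφ
  refine ⟨hfin.toFinset, ψ, fun i => (tsupport_smul_subset_left (ρ i) φ).trans (hρ i), ?_⟩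
  ext y
  rw [sum_apply]
  simp only [hψ, ← Finset.sum_smul]
  by_cases hy : φ y = 0
  · rw [hy, smul_zero]
  · have hyt : y ∈ tsupport φ := subset_tsupport _ hy
    have hone : ∑ i ∈ hfin.toFinset, ρ i y = 1 := by
      rw [← ρ.sum_eq_one hyt, finsum_eq_sum_of_support_subset]
      intro i hi
      exact hfin.mem_toFinset.2 ⟨y, hi, hyt⟩
    rw [hone, one_smul]

theorem map_eq_zero_of_disjoint_dsupport (L : 𝓢(E, F) →+ M) {φ : 𝓢(E, F)}
    (hφ : HasCompactSupport φ) (hdisj : Disjoint (tsupport φ) (dsupport L)) : L φ = 0 := by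
  have hlocal (ξ : tsupport φ) : ∃ U, IsVanishingOn L U ∧ IsOpen U ∧ (ξ : E) ∈ U :=
    (notMem_dsupport_iff _).1 (hdisj.notMem_of_mem_left ξ.2)
  choose U hvanish hopen hmem using hlocal
  obtain ⟨s, ψ, hψ, hsum⟩ := exists_finset_sum_eq_of_tsupport_subset_iUnion hφ hopen
    fun ξ hξ => Set.mem_iUnion.2 ⟨⟨ξ, hξ⟩, hmem ⟨ξ, hξ⟩⟩
  rw [← hsum, map_sum]
  exact Finset.sum_eq_zero fun ξ _ => hvanish ξ (ψ ξ) (hψ ξ)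

end DistributionSupport

section Action

variable {E : Type*} [NormedAddCommGroup E] [InnerProductSpace ℝ E] [FiniteDimensional ℝ E]
  [MeasurableSpace E] [BorelSpace E]
  {𝓧 : Type*} [NormedAddCommGroup 𝓧] [NormedSpace ℂ 𝓧]

theorem exists_mul_integral_norm_convolution_modulate_dilate_sub_lt (C : ℝ) {f V : E → ℂ}
    (hf : Integrable f) (hV : Integrable V) {ξ : E} (hξ : 𝓕 f ξ ≠ 0) :
    ∃ r : ℝ, 0 < r ∧ C * (∫ t, ‖(f ⋆[mul ℂ ℂ] modulate ξ (dilate r V)) t -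
      𝓕 f ξ * modulate ξ (dilate r V) t‖) < ‖𝓕 f ξ‖ := by
  have hlim := (tendsto_integral_norm_convolution_modulate_dilate_sub (mul ℂ ℂ) hf hV ξ).const_mul C
  rw [mul_zero] at hlim
  obtain ⟨r, hsmall, hr⟩ :=
    ((hlim.eventually_lt_const (norm_pos_iff.2 hξ)).and self_mem_nhdsWithin).exists
  exact ⟨r, hr, hsmall⟩

/-- A bounded action of the convolution algebra `L¹(E)` on `𝓧`, with bound `C`. The elements of
`L¹(E)` are represented by integrable functions, and the values of `act` at non-integrable
functions are irrelevant. -/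
structure IsBoundedL1Action (act : (E → ℂ) → 𝓧 → 𝓧) (C : ℝ) : Prop where
  act_add : ∀ ⦃f g : E → ℂ⦄, Integrable f → Integrable g → ∀ x, act (f + g) x = act f x + act g x
  act_smul : ∀ (c : ℂ) ⦃f : E → ℂ⦄, Integrable f → ∀ x, act (c • f) x = c • act f x
  act_convolution : ∀ ⦃f g : E → ℂ⦄, Integrable f → Integrable g → ∀ x,
    act (f ⋆[mul ℂ ℂ] g) x = act f (act g x)
  norm_act_le : ∀ ⦃f : E → ℂ⦄, Integrable f → ∀ x, ‖act f x‖ ≤ C * (∫ t, ‖f t‖) * ‖x‖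

namespace IsBoundedL1Action

variable {act : (E → ℂ) → 𝓧 → 𝓧} {C : ℝ} {f g k : E → ℂ}

theorem act_zero_right (h : IsBoundedL1Action act C) (hf : Integrable f) : act f 0 = 0 := by
  simpa only [norm_zero, mul_zero, norm_le_zero_iff] using h.norm_act_le hf 0

theorem act_comm (h : IsBoundedL1Action act C) (hf : Integrable f) (hg : Integrable g) (x : 𝓧) :
    act f (act g x) = act g (act f x) := by
  rw [← h.act_convolution hf hg, ← h.act_convolution hg hf, ← convolution_flip,
    flip_mul]

theorem act_sub_smul (h : IsBoundedL1Action act C) (hf : Integrable f) (hg : Integrable g)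
    (c : ℂ) (x : 𝓧) : act (f - c • g) x = act f x - c • act g x := by
  rw [sub_eq_add_neg, ← neg_smul, h.act_add hf (hg.smul (-c)), h.act_smul _ hg, neg_smul,
    ← sub_eq_add_neg]

theorem norm_act_act_sub_smul_le (h : IsBoundedL1Action act C) (hf : Integrable f)
    (hg : Integrable g) (hk : Integrable k) (c : ℂ) (x : 𝓧) :
    ‖act f (act g x) - c • act k x‖ ≤ C * (∫ t, ‖(f ⋆[mul ℂ ℂ] g) t - c * k t‖) * ‖x‖ := by
  have hfg : Integrable (f ⋆[mul ℂ ℂ] g) := hf.integrable_convolution _ hg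
  rw [← h.act_convolution hf hg, ← h.act_sub_smul hfg hk]
  exact h.norm_act_le (hfg.sub (hk.smul c)) x

/-- The vector-valued distribution on the frequency side attached to `x`; its support plays the
role of the Beurling spectrum of `x`. -/
noncomputable def spectralDistribution (h : IsBoundedL1Action act C) (x : 𝓧) :
    𝓢(E, ℂ) →+ 𝓧 :=
  AddMonoidHom.mk' (fun φ => act (𝓕⁻ φ : 𝓢(E, ℂ)) x) fun φ ψ => by
    rw [FourierTransform.fourierInv_add]
    exact h.act_add (𝓕⁻ φ).integrable (𝓕⁻ ψ).integrable x

theorem spectralDistribution_apply (h : IsBoundedL1Action act C) (x : 𝓧) (φ : 𝓢(E, ℂ)) :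
    h.spectralDistribution x φ = act (𝓕⁻ φ : 𝓢(E, ℂ)) x :=
  rfl

theorem eq_zero_of_act_eq_self (h : IsBoundedL1Action act C) (hf : Integrable f)
    (hg : Integrable g) {c : ℂ} (hc : C * (∫ t, ‖(f ⋆[mul ℂ ℂ] g) t - c * g t‖) < ‖c‖)
    {y : 𝓧} (hfy : act f y = 0) (hgy : act g y = y) : y = 0 := by
  have hle : ‖c‖ * ‖y‖ ≤ C * (∫ t, ‖(f ⋆[mul ℂ ℂ] g) t - c * g t‖) * ‖y‖ := by
    simpa only [hgy, hfy, zero_sub, norm_neg, norm_smul] using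
      h.norm_act_act_sub_smul_le hf hg hg c y
  by_contra hy
  exact hc.not_ge (le_of_mul_le_mul_right hle (norm_pos_iff.2 hy))

theorem notMem_dsupport_spectralDistribution (h : IsBoundedL1Action act C) {x : 𝓧} {ξ : E}
    (hf : Integrable f) (hξ : 𝓕 f ξ ≠ 0) (hfx : act f x = 0) :
    ξ ∉ dsupport (h.spectralDistribution x) := by
  obtain ⟨χ, -, hχ⟩ := exists_schwartzMap_hasCompactSupport_eventuallyEq_one E
  obtain ⟨U, hU, hUopen, hU0⟩ := eventually_nhds_iff.1 hχ
  obtain ⟨r, hr, hsmall⟩ :=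
    exists_mul_integral_norm_convolution_modulate_dilate_sub_lt C hf (𝓕⁻ χ).integrable hξ
  rw [← fourierInv_rescale ξ hr] at hsmall
  refine (notMem_dsupport_iff ξ).2 ⟨(fun y => r⁻¹ • (y - ξ)) ⁻¹' U, fun φ hφ => ?_,
    hUopen.preimage (by fun_prop), by simpa using hU0⟩
  have hmul (y : E) : rescale ξ hr.ne' χ y * φ y = φ y := by
    by_cases hy : φ y = 0
    · rw [hy, mul_zero]
    · rw [rescale_apply, hU _ (hφ (subset_tsupport φ hy)), Pi.one_apply, one_mul]
  have hχr : Integrable (𝓕⁻ (rescale ξ hr.ne' χ) : 𝓢(E, ℂ)) := SchwartzMap.integrable _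
  refine h.eq_zero_of_act_eq_self hf hχr hsmall ?_ ?_
  · rw [spectralDistribution_apply, h.act_comm hf (𝓕⁻ φ).integrable, hfx,
      h.act_zero_right (𝓕⁻ φ).integrable]
  · rw [spectralDistribution_apply, ← h.act_convolution hχr (𝓕⁻ φ).integrable,
      fourierInv_convolution_fourierInv_of_mul_eq hmul]

theorem act_eq_zero_of_forall_act_dilate_eq_zero (h : IsBoundedL1Action act C) {V : E → ℂ}
    (hV : Integrable V) (hmass : ∫ t, V t = 1) {x : 𝓧}
    (hx : ∀ r : ℝ, 0 < r → act (dilate r V) x = 0) (hf : Integrable f) : act f x = 0 := by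
  have hlim : Tendsto (fun r : ℝ => C * (∫ t, ‖(dilate r V ⋆[mul ℂ ℂ] f) t - 1 * f t‖) * ‖x‖)
      atTop (𝓝 0) := by
    have happrox := tendsto_integral_norm_dilate_convolution_sub (mul ℂ ℂ) hV hf
    rw [hmass] at happrox
    simpa only [mul_apply', mul_zero, zero_mul] using (happrox.const_mul C).mul_const ‖x‖
  refine norm_le_zero_iff.1 (ge_of_tendsto hlim ?_)
  filter_upwards [eventually_gt_atTop 0] with r hr
  have hVr : Integrable (dilate r V) := integrable_dilate hV hr.ne'
  simpa only [h.act_comm hVr hf, hx r hr, h.act_zero_right hf, one_smul, zero_sub, norm_neg] using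
    h.norm_act_act_sub_smul_le hVr hf hf 1 x

theorem act_eq_zero_of_dsupport_spectralDistribution_eq_empty (h : IsBoundedL1Action act C) {x : 𝓧}
    (hx : dsupport (h.spectralDistribution x) = ∅) (hf : Integrable f) : act f x = 0 := by
  obtain ⟨χ, hχ, hχ1⟩ := exists_schwartzMap_hasCompactSupport_eventuallyEq_one E
  have hmass : ∫ t, (𝓕⁻ χ : 𝓢(E, ℂ)) t = 1 :=
    (integral_fourierInv_schwartzMap χ).trans hχ1.eq_of_nhds
  refine h.act_eq_zero_of_forall_act_dilate_eq_zero (𝓕⁻ χ).integrable hmass (fun r hr => ?_) hf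
  rw [← modulate_zero (dilate r _), ← fourierInv_rescale 0 hr, ← h.spectralDistribution_apply]
  exact map_eq_zero_of_disjoint_dsupport _ (hasCompactSupport_rescale 0 hr.ne' hχ)
    (hx ▸ Set.disjoint_empty _)

end IsBoundedL1Action

theorem stmt18_general {act : (E → ℂ) → 𝓧 → 𝓧} {C : ℝ} (h : IsBoundedL1Action act C)
    (hnondeg : ∀ x : 𝓧, (∀ f : E → ℂ, Integrable f → act f x = 0) → x = 0) {x : 𝓧}
    (hx : ∀ ξ : E, ∃ f : E → ℂ, Integrable f ∧ 𝓕 f ξ ≠ 0 ∧ act f x = 0) : x = 0 := by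
  have hsupport : dsupport (h.spectralDistribution x) = ∅ := by
    refine Set.eq_empty_of_forall_notMem fun ξ => ?_
    obtain ⟨f, hf, hξ, hfx⟩ := hx ξ
    exact h.notMem_dsupport_spectralDistribution hf hξ hfx
  exact hnondeg x fun f hf => h.act_eq_zero_of_dsupport_spectralDistribution_eq_empty hsupport hf

end Action

theorem fhat_two_pi_mul (f : ℝ → ℂ) (ξ : ℝ) : fhat f (2 * Real.pi * ξ) = 𝓕 f ξ := by
  rw [Real.fourier_real_eq_integral_exp_smul, fhat]
  congr 1 with t
  rw [smul_eq_mul, mul_comm]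
  congr 2
  push_cast
  ring

theorem notMem_beurlingSpectrum_iff {𝓧 : Type*} [NormedAddCommGroup 𝓧] [NormedSpace ℂ 𝓧]
    {act : (ℝ → ℂ) → 𝓧 → 𝓧} {x : 𝓧} {ξ : ℝ} :
    2 * Real.pi * ξ ∉ BeurlingSpectrum act x ↔
      ∃ f : ℝ → ℂ, Integrable f ∧ 𝓕 f ξ ≠ 0 ∧ act f x = 0 := by
  simp only [BeurlingSpectrum, Set.notMem_compl_iff, Set.mem_ofPred_eq, fhat_two_pi_mul]

/-- In a nondegenerate Banach `L¹(ℝ)`-module, an element with empty Beurling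
spectrum is zero. -/
theorem stmt18 {𝓧 : Type*} [NormedAddCommGroup 𝓧] [NormedSpace ℂ 𝓧]
    (act : (ℝ → ℂ) → 𝓧 → 𝓧)
    (hlin : ∀ f : ℝ → ℂ, Integrable f → IsLinearMap ℂ (act f))
    (hadd : ∀ f g : ℝ → ℂ, Integrable f → Integrable g → ∀ x : 𝓧,
      act (f + g) x = act f x + act g x)
    (hsmul : ∀ (c : ℂ) (f : ℝ → ℂ), Integrable f → ∀ x : 𝓧,
      act (c • f) x = c • act f x)
    (hconv : ∀ f g : ℝ → ℂ, Integrable f → Integrable g → ∀ x : 𝓧,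
      act (fun t => ∫ s : ℝ, f (t - s) * g s) x = act f (act g x))
    (hnorm : ∀ f : ℝ → ℂ, Integrable f → ∀ x : 𝓧,
      ‖act f x‖ ≤ (∫ t : ℝ, ‖f t‖) * ‖x‖)
    (hnondeg : ∀ x : 𝓧, (∀ f : ℝ → ℂ, Integrable f → act f x = 0) → x = 0)
    (x : 𝓧) (hx : BeurlingSpectrum act x = ∅) :
    x = 0 := by
  have hact : IsBoundedL1Action act 1 :=
    ⟨hadd, hsmul,
      fun f g hf hg y => (congrArg (act · y) (funext fun _ => convolution_mul_swap)).trans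
        (hconv f g hf hg y),
      fun f hf y => by simpa only [one_mul] using hnorm f hf y⟩
  exact stmt18_general hact hnondeg fun _ =>
    notMem_beurlingSpectrum_iff.1 (hx ▸ Set.notMem_empty _)
end
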